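/- arXiv:1402.4397 — 2 statements merged into one kernel-verified Lean document; each statement's English description precedes it below -/
import Mathlib

section
/- Let T be a commutative reduced cancellative monoid, H an atomic cancellative monoid, d a distance on H, and φ: H → T a transfer homomorphism; let φ* denote the induced map on rigid factorizations, sending the class of (ε, (u_1, …, u_k)) to the word (φ(u_1), …, φ(u_k)) of atoms of T. Define c_d(a, φ) as the smallest N ∈ ℕ ∪ {∞} such that for any two rigid factorizations z, z' of a with d_p(φ*(z), φ*(z')) = 0 there is a chain z = z_0, z_1, …, z_n = z' in Z*(a) with d(z_{i−1}, z_i) ≤ N and d_p(φ*(z_i), φ*(z)) = 0 for all i, and set c_d(H, φ) = sup{c_d(a, φ) : a ∈ H}. Then for every a ∈ H: c_d(a) ≤ max{c_p(φ(a)), c_d(a, φ)}, and consequently c_d(H) ≤ max{c_p(T), c_d(H, φ)}. -/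
def MAtom {H : Type*} [Monoid H] (u : H) : Prop :=
  ¬ IsUnit u ∧ ∀ a b : H, u = a * b → IsUnit a ∨ IsUnit b

def TAssoc {H : Type*} [Monoid H] (a b : H) : Prop :=
  ∃ ε η : Hˣ, b = (ε : H) * a * (η : H)

def Atomic (H : Type*) [Monoid H] : Prop :=
  ∀ a : H, ¬ IsUnit a → ∃ l : List H, l ≠ [] ∧ (∀ u ∈ l, MAtom u) ∧ a = l.prod

def T1Cond {H T : Type*} [Monoid H] [Monoid T] (φ : H →* T) : Prop :=
  (∀ t : T, ∃ (ε η : Tˣ) (a : H), t = (ε : T) * φ a * (η : T)) ∧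
    ∀ a : H, IsUnit (φ a) ↔ IsUnit a

def IsTransferHom {H T : Type*} [Monoid H] [Monoid T] (φ : H →* T) : Prop :=
  T1Cond φ ∧
    ∀ (a : H) (b₁ b₂ : T), φ a = b₁ * b₂ →
      ∃ (a₁ a₂ : H) (ε : Tˣ), a = a₁ * a₂ ∧ φ a₁ = b₁ * ((ε⁻¹ : Tˣ) : T) ∧ φ a₂ = (ε : T) * b₂

def IsWeakTransferHom {H T : Type*} [Monoid H] [Monoid T] (φ : H →* T) : Prop :=
  T1Cond φ ∧
    ∀ (a : H) (n : ℕ), 0 < n → ∀ v : Fin n → T, (∀ i, MAtom (v i)) →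
      φ a = (List.ofFn v).prod →
      ∃ (u : Fin n → H) (σ : Equiv.Perm (Fin n)),
        (∀ i, MAtom (u i)) ∧ a = (List.ofFn u).prod ∧ ∀ i, TAssoc (φ (u i)) (v (σ i))

def IsIsoatomic {H T : Type*} [Monoid H] [Monoid T] (φ : H →* T) : Prop :=
  ∀ u v : H, MAtom u → MAtom v → TAssoc (φ u) (φ v) → TAssoc u v

def lengthsOf {H : Type*} [Monoid H] (a : H) : Set ℕ :=
  {n | (n = 0 ∧ IsUnit a) ∨
    ∃ l : List H, l ≠ [] ∧ (∀ u ∈ l, MAtom u) ∧ a = l.prod ∧ l.length = n}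
structure RF (H : Type*) [Monoid H] where
  u : Hˣ
  l : List H

namespace RF

variable {H : Type*} [Monoid H]

def IsRigid (z : RF H) : Prop := ∀ x ∈ z.l, MAtom x

def prod (z : RF H) : H := (z.u : H) * z.l.prod

def len (z : RF H) : ℕ := z.l.length

def mul (z w : RF H) : RF H :=
  match z.l with
  | [] => ⟨z.u * w.u, w.l⟩
  | a :: as =>
      ⟨z.u, ((a :: as).dropLast ++
        [(a :: as).getLast (List.cons_ne_nil a as) * (w.u : H)]) ++ w.l⟩

end RF

/-- The equivalence relation on rigid factorization data: same length, and the
atoms agree up to an interpolating family of units `δ`, with the unit part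
absorbing `δ 0` and `δ` becoming trivial after the last atom. -/
def RFEq {H : Type*} [Monoid H] (z w : RF H) : Prop :=
  ∃ δ : ℕ → Hˣ,
    z.l.length = w.l.length ∧ δ z.l.length = 1 ∧ w.u = z.u * (δ 0)⁻¹ ∧
    ∀ (i : ℕ) (hi : i < z.l.length) (hi' : i < w.l.length),
      w.l.get ⟨i, hi'⟩ = ((δ i : H)) * z.l.get ⟨i, hi⟩ * (((δ (i + 1))⁻¹ : Hˣ) : H)

/-- A distance on the rigid factorizations of `H` (axioms (D1)-(D5); (D1) is stated
in the strong form saying the distance vanishes on equivalent rigid factorizations,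
which encodes well-definedness on the category of rigid factorizations). -/
structure IsDistance (H : Type*) [Monoid H] (d : RF H → RF H → ℕ) : Prop where
  d_eq : ∀ z w : RF H, z.IsRigid → w.IsRigid → RFEq z w → d z w = 0
  d_symm : ∀ z w : RF H, z.IsRigid → w.IsRigid → z.prod = w.prod → d z w = d w z
  d_tri : ∀ z w v : RF H, z.IsRigid → w.IsRigid → v.IsRigid →
    z.prod = w.prod → w.prod = v.prod → d z v ≤ d z w + d w v
  d_mul_left : ∀ x z w : RF H, x.IsRigid → z.IsRigid → w.IsRigid → z.prod = w.prod →
    d (x.mul z) (x.mul w) = d z w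
  d_mul_right : ∀ y z w : RF H, y.IsRigid → z.IsRigid → w.IsRigid → z.prod = w.prod →
    d (z.mul y) (w.mul y) = d z w
  d_len : ∀ z w : RF H, z.IsRigid → w.IsRigid → z.prod = w.prod →
    (z.len - w.len ≤ d z w ∧ w.len - z.len ≤ d z w) ∧ d z w ≤ max (max z.len w.len) 1

/-- An `N`-chain of rigid factorizations of `a` between `z` and `w`, in distance `d`. -/
def IsNChain {H : Type*} [Monoid H] (d : RF H → RF H → ℕ) (a : H) (N : ℕ∞)
    (z w : RF H) : Prop :=
  ∃ (n : ℕ) (c : ℕ → RF H), c 0 = z ∧ c n = w ∧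
    (∀ i ≤ n, (c i).IsRigid ∧ (c i).prod = a) ∧
    ∀ i < n, (d (c i) (c (i + 1)) : ℕ∞) ≤ N

/-- A monotone `N`-chain: in addition the lengths are non-decreasing or non-increasing. -/
def IsMonNChain {H : Type*} [Monoid H] (d : RF H → RF H → ℕ) (a : H) (N : ℕ∞)
    (z w : RF H) : Prop :=
  ∃ (n : ℕ) (c : ℕ → RF H), c 0 = z ∧ c n = w ∧
    (∀ i ≤ n, (c i).IsRigid ∧ (c i).prod = a) ∧
    (∀ i < n, (d (c i) (c (i + 1)) : ℕ∞) ≤ N) ∧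
    ((∀ i j, i ≤ j → j ≤ n → (c i).len ≤ (c j).len) ∨
      (∀ i j, i ≤ j → j ≤ n → (c j).len ≤ (c i).len))

/-- The catenary degree of `a` in distance `d`. -/
noncomputable def catenaryDeg {H : Type*} [Monoid H] (d : RF H → RF H → ℕ) (a : H) : ℕ∞ :=
  sInf {N : ℕ∞ | ∀ z w : RF H, z.IsRigid → w.IsRigid → z.prod = a → w.prod = a →
    IsNChain d a N z w}

/-- The monotone catenary degree of `a` in distance `d`. -/
noncomputable def catenaryDegMon {H : Type*} [Monoid H] (d : RF H → RF H → ℕ) (a : H) : ℕ∞ :=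
  sInf {N : ℕ∞ | ∀ z w : RF H, z.IsRigid → w.IsRigid → z.prod = a → w.prod = a →
    IsMonNChain d a N z w}

/-- The set of distances of a set of naturals. -/
def DeltaSet (L : Set ℕ) : Set ℕ :=
  {d | 0 < d ∧ ∃ l ∈ L, l + d ∈ L ∧ ∀ m ∈ L, l < m → m < l + d → False}
/-- Two-sided associativity is an equivalence relation. -/
def assocSetoid (H : Type*) [Monoid H] : Setoid H where
  r := TAssoc
  iseqv := by
    constructor
    · intro a; exact ⟨1, 1, by simp⟩
    · rintro a b ⟨ε, η, rfl⟩
      exact ⟨ε⁻¹, η⁻¹, by simp [mul_assoc]⟩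
    · rintro a b c ⟨ε, η, rfl⟩ ⟨ε', η', rfl⟩
      exact ⟨ε' * ε, η * η', by simp [mul_assoc]⟩

/-- Associativity classes of elements of `H`. -/
def AClass (H : Type*) [Monoid H] := Quotient (assocSetoid H)

def mkCls {H : Type*} [Monoid H] (a : H) : AClass H := Quotient.mk (assocSetoid H) a

/-- The distance between two multisets: `max {card s - card (s ∩ t), card t - card (s ∩ t)}`. -/
noncomputable def mdist {α : Type*} (s t : Multiset α) : ℕ :=
  letI := Classical.decEq α
  max (Multiset.card s - Multiset.card (s ∩ t)) (Multiset.card t - Multiset.card (s ∩ t))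

/-- The multiset of associativity classes of the entries of a list. -/
def clsList {H : Type*} [Monoid H] (l : List H) : Multiset (AClass H) :=
  ((l.map mkCls : List (AClass H)) : Multiset (AClass H))

/-- The permutable distance between two rigid factorizations. -/
noncomputable def dpRF {H : Type*} [Monoid H] (z w : RF H) : ℕ :=
  mdist (clsList z.l) (clsList w.l)

/-- The permutable catenary degree of an element. -/
noncomputable def cpDeg {H : Type*} [Monoid H] (a : H) : ℕ∞ :=
  sInf {N : ℕ∞ | ∀ z w : RF H, z.IsRigid → w.IsRigid → z.prod = a → w.prod = a →
    ∃ (n : ℕ) (c : ℕ → RF H), c 0 = z ∧ c n = w ∧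
      (∀ i ≤ n, (c i).IsRigid ∧ (c i).prod = a) ∧
      ∀ i < n, (dpRF (c i) (c (i + 1)) : ℕ∞) ≤ N}

/-- The permutable catenary degree of a monoid. -/
noncomputable def cpMon (H : Type*) [Monoid H] : ℕ∞ := ⨆ a : H, cpDeg a

/-- The map induced on rigid factorization data by a monoid homomorphism. -/
def mapRF {H T : Type*} [Monoid H] [Monoid T] (φ : H →* T) (z : RF H) : RF T :=
  ⟨Units.map φ z.u, z.l.map φ⟩
/-- The multiset of images of the atoms of a rigid factorization under `φ`. -/
def phiS {H T : Type*} [Monoid H] [Monoid T] (φ : H →* T) (z : RF H) : Multiset T :=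
  ((z.l.map φ : List T) : Multiset T)

/-- The catenary degree of `a` in the permutable fibers of `φ`, in distance `d`. -/
noncomputable def cdFib {H T : Type*} [Monoid H] [Monoid T]
    (d : RF H → RF H → ℕ) (φ : H →* T) (a : H) : ℕ∞ :=
  sInf {N : ℕ∞ | ∀ z w : RF H, z.IsRigid → w.IsRigid → z.prod = a → w.prod = a →
    mdist (phiS φ z) (phiS φ w) = 0 →
    ∃ (n : ℕ) (c : ℕ → RF H), c 0 = z ∧ c n = w ∧
      (∀ i ≤ n, (c i).IsRigid ∧ (c i).prod = a ∧ mdist (phiS φ (c i)) (phiS φ z) = 0) ∧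
      ∀ i < n, (d (c i) (c (i + 1)) : ℕ∞) ≤ N}

/-- The permutable catenary degree of an element of a commutative reduced monoid,
where factorizations are multisets of atoms. -/
noncomputable def cpTDeg {T : Type*} [CommMonoid T] (b : T) : ℕ∞ :=
  sInf {N : ℕ∞ | ∀ s t : Multiset T, (∀ v ∈ s, MAtom v) → s.prod = b →
    (∀ v ∈ t, MAtom v) → t.prod = b →
    ∃ (n : ℕ) (c : ℕ → Multiset T), c 0 = s ∧ c n = t ∧
      (∀ i ≤ n, (∀ v ∈ c i, MAtom v) ∧ (c i).prod = b) ∧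
      ∀ i < n, (mdist (c i) (c (i + 1)) : ℕ∞) ≤ N}

/-! A chain of factorizations of `φ a` in `T` realizing the permutable catenary degree is lifted step
by step to `Z*(a)`: two factorizations `g + s` and `g + t` of `φ a` share the part `g`, so splitting
`a` along `g` and lifting `g`, `s` and `t` separately gives rigid factorizations `x * y` and `x * y'`
of `a`, at distance `d y y' ≤ max |s| |t|` by (D4) and (D5). Consecutive lifted steps meet in the
same permutable fiber of `φ`, where they are joined by chains bounded by the catenary degree in the
fibers. -/

open Relation

section Chains

variable {α β : Type*}

/-- A step of an `N`-chain inside `s` for the distance `D`; the chains themselves are encoded by the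
reflexive transitive closure, so that they compose without any reindexing of sequences. -/
def IsStep (s : Set α) (D : α → α → ℕ) (N : ℕ∞) (x y : α) : Prop :=
  x ∈ s ∧ y ∈ s ∧ (D x y : ℕ∞) ≤ N

theorem IsStep.mono {s t : Set α} {D : α → α → ℕ} {M N : ℕ∞} (hst : s ⊆ t) (hMN : M ≤ N) :
    IsStep s D M ≤ IsStep t D N :=
  fun _ _ h => ⟨hst h.1, hst h.2.1, h.2.2.trans hMN⟩

theorem exists_seq_iff_reflTransGen_isStep {s : Set α} {D : α → α → ℕ} {N : ℕ∞} {x y : α}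
    (hx : x ∈ s) :
    (∃ (n : ℕ) (c : ℕ → α), c 0 = x ∧ c n = y ∧ (∀ i ≤ n, c i ∈ s) ∧
        ∀ i < n, (D (c i) (c (i + 1)) : ℕ∞) ≤ N) ↔
      ReflTransGen (IsStep s D N) x y := by
  constructor
  · rintro ⟨n, c, rfl, rfl, hs, hD⟩
    exact (reflTransGen_of_succ_of_le (fun i j => IsStep s D N (c i) (c j))
      (fun i hi => ⟨hs i hi.2.le, hs (i + 1) hi.2, hD i hi.2⟩) n.zero_le).lift c fun _ _ => id
  · intro h
    induction h using ReflTransGen.head_induction_on with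
    | refl => exact ⟨0, fun _ => y, rfl, rfl, fun _ _ => hx, by simp⟩
    | @head x x' hstep _ ih =>
      obtain ⟨n, c, hc0, hcn, hs, hD⟩ := ih hstep.2.1
      refine ⟨n + 1, fun i => i.casesOn x c, rfl, hcn, ?_, ?_⟩
      · rintro (_ | i) hi
        exacts [hx, hs i (by omega)]
      · rintro (_ | i) hi
        exacts [(congrArg (fun u => (D x u : ℕ∞)) hc0).trans_le hstep.2.2, hD i (by omega)]

theorem sInf_le_iff_forall_reflTransGen {A : Set ℕ∞} {s : Set α} {t : α → Set α} {D : α → α → ℕ}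
    (ht : ∀ x ∈ s, x ∈ t x)
    (hA : ∀ N, N ∈ A ↔ ∀ x ∈ s, ∀ y ∈ t x, ReflTransGen (IsStep (t x) D N) x y) {N : ℕ∞} :
    sInf A ≤ N ↔ ∀ x ∈ s, ∀ y ∈ t x, ReflTransGen (IsStep (t x) D N) x y := by
  refine ⟨fun hN x hx y hy => ?_, fun h => sInf_le ((hA N).2 h)⟩
  have htop : ⊤ ∈ A := (hA ⊤).2 fun x hx y hy => .single ⟨ht x hx, hy, le_top⟩
  exact ReflTransGen.mono (.mono subset_rfl hN) _ _ ((hA _).1 (csInf_mem ⟨⊤, htop⟩) x hx y hy)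

theorem reflTransGen_of_map {f : α → β} {s : Set α} {r : α → α → Prop} {q : β → β → Prop}
    (hfiber : ∀ x ∈ s, ∀ y ∈ s, f x = f y → ReflTransGen r x y)
    (hlift : ∀ b c, q b c → ∃ x ∈ s, ∃ y ∈ s, f x = b ∧ f y = c ∧ r x y)
    {x y : α} (hx : x ∈ s) (hy : y ∈ s) (h : ReflTransGen q (f x) (f y)) :
    ReflTransGen r x y := by
  generalize hb : f y = b at h
  induction h generalizing y with
  | refl => exact hfiber x hx y hy hb.symm
  | tail _ hbc ih =>
    obtain ⟨u, hu, v, hv, hfu, hfv, huv⟩ := hlift _ _ hbc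
    exact ((ih hu hfu).tail huv).trans (hfiber v hv y hy (hfv.trans hb.symm))

end Chains

section MultisetDistance

variable {α : Type*}

theorem exists_eq_add_mdist_eq (s t : Multiset α) :
    ∃ g s' t' : Multiset α, s = g + s' ∧ t = g + t' ∧ mdist s t = max s'.card t'.card := by
  classical
  obtain ⟨s', hs⟩ := Multiset.le_iff_exists_add.1 (Multiset.inter_le_left (s := s) (t := t))
  obtain ⟨t', ht⟩ := Multiset.le_iff_exists_add.1 (Multiset.inter_le_right (s := s) (t := t))
  refine ⟨s ∩ t, s', t', hs, ht, ?_⟩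
  have hs_card := congrArg Multiset.card hs
  have ht_card := congrArg Multiset.card ht
  rw [Multiset.card_add] at hs_card ht_card
  unfold mdist
  congr 1 <;> omega

theorem mdist_eq_zero {s t : Multiset α} : mdist s t = 0 ↔ s = t := by
  constructor
  · obtain ⟨g, s', t', rfl, rfl, h⟩ := exists_eq_add_mdist_eq s t
    intro h0
    have hmax : max s'.card t'.card = 0 := h ▸ h0
    simp_all
  · rintro rfl
    simp [mdist, ← Multiset.inf_eq_inter]

end MultisetDistance

theorem mAtom_iff_irreducible {H : Type*} [Monoid H] {u : H} : MAtom u ↔ Irreducible u :=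
  irreducible_iff.symm

namespace RF

variable {H : Type*} [Monoid H]

theorem nil_mul (u : Hˣ) (w : RF H) : (⟨u, []⟩ : RF H).mul w = ⟨u * w.u, w.l⟩ :=
  rfl

theorem concat_mul (u : Hˣ) (l : List H) (b : H) (w : RF H) :
    (⟨u, l ++ [b]⟩ : RF H).mul w = ⟨u, l ++ [b * w.u] ++ w.l⟩ := by
  cases l with
  | nil => rfl
  | cons c l =>
    have hdrop : (c :: (l ++ [b])).dropLast = c :: l := List.dropLast_concat (l₁ := c :: l)
    simp [mul, hdrop]

theorem prod_mul (z w : RF H) : (z.mul w).prod = z.prod * w.prod := by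
  obtain ⟨u, l⟩ := z
  cases l using List.reverseRecOn <;> simp [nil_mul, concat_mul, prod, mul_assoc]

theorem IsRigid.mul {z w : RF H} (hz : z.IsRigid) (hw : w.IsRigid) : (z.mul w).IsRigid := by
  obtain ⟨u, l⟩ := z
  cases l using List.reverseRecOn with
  | nil => exact hw
  | append_singleton l b =>
    simp_all [IsRigid, concat_mul, mAtom_iff_irreducible, or_imp, forall_and,
      irreducible_mul_units]

end RF

theorem card_phiS {H T : Type*} [Monoid H] [Monoid T] (φ : H →* T) (z : RF H) :
    (phiS φ z).card = z.len := by
  simp [phiS, RF.len]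

theorem IsDistance.dist_self {H : Type*} [Monoid H] {d : RF H → RF H → ℕ} (hd : IsDistance H d)
    {z : RF H} (hz : z.IsRigid) : d z z = 0 :=
  hd.d_eq z z hz hz ⟨1, by simp⟩

section Factorizations

variable {H T : Type*}

/-- The set `Z*(a)` of rigid factorizations of `a`, through their representatives. -/
def rigidFactorizations [Monoid H] (a : H) : Set (RF H) :=
  {z | z.IsRigid ∧ z.prod = a}

/-- The factorizations of `b` into atoms up to permutation. Associated atoms are not identified, as
the notion is meant for reduced monoids. -/
def permutableFactorizations [CommMonoid T] (b : T) : Set (Multiset T) :=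
  {s | (∀ v ∈ s, MAtom v) ∧ s.prod = b}

/-- The permutable fiber of `φ` in `Z*(a)` through `z`: the rigid factorizations of `a` whose image
under `φ` is a permutation of that of `z`. -/
def permutableFiber [Monoid H] [Monoid T] (φ : H →* T) (a : H) (z : RF H) : Set (RF H) :=
  {w | w.IsRigid ∧ w.prod = a ∧ phiS φ w = phiS φ z}

theorem permutableFiber_subset [Monoid H] [Monoid T] (φ : H →* T) (a : H) (z : RF H) :
    permutableFiber φ a z ⊆ rigidFactorizations a :=
  fun _ hw => ⟨hw.1, hw.2.1⟩

theorem mul_mem_rigidFactorizations [Monoid H] {a b : H} {z w : RF H}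
    (hz : z ∈ rigidFactorizations a) (hw : w ∈ rigidFactorizations b) :
    z.mul w ∈ rigidFactorizations (a * b) :=
  ⟨hz.1.mul hw.1, by rw [RF.prod_mul, hz.2, hw.2]⟩

theorem catenaryDeg_le_iff [Monoid H] {d : RF H → RF H → ℕ} {a : H} {N : ℕ∞} :
    catenaryDeg d a ≤ N ↔ ∀ z ∈ rigidFactorizations a, ∀ w ∈ rigidFactorizations a,
      ReflTransGen (IsStep (rigidFactorizations a) d N) z w := by
  unfold catenaryDeg
  refine sInf_le_iff_forall_reflTransGen (fun _ => id) fun M => ?_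
  refine ⟨fun h z hz w hw => ?_, fun h z w hz hw hza hwa => ?_⟩
  · exact (exists_seq_iff_reflTransGen_isStep hz).1 (h z w hz.1 hw.1 hz.2 hw.2)
  · exact (exists_seq_iff_reflTransGen_isStep (s := rigidFactorizations a) ⟨hz, hza⟩).2
      (h z ⟨hz, hza⟩ w ⟨hw, hwa⟩)

theorem cpTDeg_le_iff [CommMonoid T] {b : T} {N : ℕ∞} :
    cpTDeg b ≤ N ↔ ∀ s ∈ permutableFactorizations b, ∀ t ∈ permutableFactorizations b,
      ReflTransGen (IsStep (permutableFactorizations b) mdist N) s t := by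
  unfold cpTDeg
  refine sInf_le_iff_forall_reflTransGen (fun _ => id) fun M => ?_
  refine ⟨fun h s hs t ht => ?_, fun h s t hs hsb ht htb => ?_⟩
  · exact (exists_seq_iff_reflTransGen_isStep hs).1 (h s t hs.1 hs.2 ht.1 ht.2)
  · exact (exists_seq_iff_reflTransGen_isStep (s := permutableFactorizations b) ⟨hs, hsb⟩).2
      (h s ⟨hs, hsb⟩ t ⟨ht, htb⟩)

theorem cdFib_le_iff [Monoid H] [Monoid T] {d : RF H → RF H → ℕ} {φ : H →* T} {a : H} {N : ℕ∞} :
    cdFib d φ a ≤ N ↔ ∀ z ∈ rigidFactorizations a, ∀ w ∈ permutableFiber φ a z,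
      ReflTransGen (IsStep (permutableFiber φ a z) d N) z w := by
  have hself : ∀ z ∈ rigidFactorizations a, z ∈ permutableFiber φ a z :=
    fun z hz => ⟨hz.1, hz.2, rfl⟩
  simp only [cdFib, mdist_eq_zero]
  refine sInf_le_iff_forall_reflTransGen hself fun M => ?_
  refine ⟨fun h z hz w hw => ?_, fun h z w hz hw hza hwa hzw => ?_⟩
  · exact (exists_seq_iff_reflTransGen_isStep (hself z hz)).1
      (h z w hz.1 hw.1 hz.2 hw.2.1 hw.2.2.symm)
  · exact (exists_seq_iff_reflTransGen_isStep (hself z ⟨hz, hza⟩)).2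
      (h z ⟨hz, hza⟩ w ⟨hw, hwa, hzw.symm⟩)

end Factorizations

section Transfer

variable {H T : Type*} [Monoid H]

theorem IsTransferHom.isLocalHom [Monoid T] {φ : H →* T} (hφ : IsTransferHom φ) : IsLocalHom φ :=
  ⟨fun a => (hφ.1.2 a).1⟩

theorem map_units_eq_one [Monoid T] [Subsingleton Tˣ] (φ : H →* T) (u : Hˣ) : φ u = 1 :=
  (u.isUnit.map φ).eq_one

theorem phiS_mul [Monoid T] [Subsingleton Tˣ] (φ : H →* T) (z w : RF H) :
    phiS φ (z.mul w) = phiS φ z + phiS φ w := by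
  obtain ⟨u, l⟩ := z
  cases l using List.reverseRecOn <;>
    simp [phiS, RF.nil_mul, RF.concat_mul, map_units_eq_one]

theorem IsTransferHom.exists_eq_mul [Monoid T] [Subsingleton Tˣ] {φ : H →* T}
    (hφ : IsTransferHom φ) {a : H} {b₁ b₂ : T} (h : φ a = b₁ * b₂) :
    ∃ a₁ a₂ : H, a = a₁ * a₂ ∧ φ a₁ = b₁ ∧ φ a₂ = b₂ := by
  obtain ⟨a₁, a₂, ε, ha, h₁, h₂⟩ := hφ.2 a b₁ b₂ h
  obtain rfl : ε = 1 := Subsingleton.elim _ _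
  exact ⟨a₁, a₂, ha, by simpa using h₁, by simpa using h₂⟩

theorem IsTransferHom.mAtom_map_iff [Monoid T] [Subsingleton Tˣ] {φ : H →* T}
    (hφ : IsTransferHom φ) {a : H} : MAtom (φ a) ↔ MAtom a := by
  have := hφ.isLocalHom
  refine ⟨fun h => ?_, fun h => ⟨fun hu => h.1 (isUnit_of_map_unit φ a hu), fun p q hpq => ?_⟩⟩
  · rw [mAtom_iff_irreducible] at h ⊢
    exact h.of_map
  · obtain ⟨x, y, hxy, rfl, rfl⟩ := hφ.exists_eq_mul hpq
    exact (h.2 x y hxy).imp (·.map φ) (·.map φ)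

variable [CommMonoid T] [Subsingleton Tˣ] {φ : H →* T}

theorem IsTransferHom.phiS_mem_permutableFactorizations (hφ : IsTransferHom φ) {a : H} {z : RF H}
    (hz : z ∈ rigidFactorizations a) : phiS φ z ∈ permutableFactorizations (φ a) := by
  obtain ⟨hrigid, rfl⟩ := hz
  refine ⟨fun v hv => ?_, by simp [phiS, RF.prod, map_units_eq_one, map_list_prod]⟩
  obtain ⟨u, hu, rfl⟩ := List.mem_map.1 (Multiset.mem_coe.1 hv)
  exact hφ.mAtom_map_iff.2 (hrigid u hu)

theorem IsTransferHom.exists_phiS_eq (hφ : IsTransferHom φ) {s : Multiset T}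
    (hs : ∀ v ∈ s, MAtom v) {a : H} (ha : φ a = s.prod) :
    ∃ z ∈ rigidFactorizations a, phiS φ z = s := by
  induction s using Multiset.induction generalizing a with
  | empty =>
    have := hφ.isLocalHom
    obtain ⟨u, rfl⟩ : IsUnit a := isUnit_of_map_unit φ a (by simp [ha])
    exact ⟨⟨u, []⟩, by simp [rigidFactorizations, RF.IsRigid, RF.prod], rfl⟩
  | cons b s ih =>
    rw [Multiset.forall_mem_cons] at hs
    rw [Multiset.prod_cons] at ha
    obtain ⟨a₁, a₂, rfl, rfl, ha₂⟩ := hφ.exists_eq_mul ha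
    obtain ⟨z, hz, rfl⟩ := ih hs.2 ha₂
    have ha₁ : (⟨1, [a₁]⟩ : RF H) ∈ rigidFactorizations a₁ := by
      simpa [rigidFactorizations, RF.IsRigid, RF.prod] using hφ.mAtom_map_iff.1 hs.1
    exact ⟨_, mul_mem_rigidFactorizations ha₁ hz, by rw [phiS_mul]; rfl⟩

end Transfer

section CatenaryDegree

variable {H T : Type*} [Monoid H] [CancelCommMonoid T] [Subsingleton Tˣ]
  {d : RF H → RF H → ℕ} {φ : H →* T}

theorem IsTransferHom.exists_lift_dist_le_mdist (hφ : IsTransferHom φ) (hd : IsDistance H d)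
    {a : H} {s t : Multiset T} (hs : s ∈ permutableFactorizations (φ a))
    (ht : t ∈ permutableFactorizations (φ a)) :
    ∃ z ∈ rigidFactorizations a, ∃ w ∈ rigidFactorizations a,
      phiS φ z = s ∧ phiS φ w = t ∧ d z w ≤ mdist s t := by
  obtain rfl | hst := eq_or_ne s t
  · obtain ⟨z, hz, hzs⟩ := hφ.exists_phiS_eq hs.1 hs.2.symm
    exact ⟨z, hz, z, hz, hzs, hzs, (hd.dist_self hz.1).trans_le (Nat.zero_le _)⟩
  have hpos : 1 ≤ mdist s t := Nat.one_le_iff_ne_zero.2 (mdist_eq_zero.not.2 hst)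
  obtain ⟨g, s', t', rfl, rfl, hmdist⟩ := exists_eq_add_mdist_eq s t
  obtain ⟨hs, hsa⟩ := hs
  obtain ⟨ht, hta⟩ := ht
  simp only [Multiset.mem_add, or_imp, forall_and] at hs ht
  rw [Multiset.prod_add] at hsa hta
  have hs't' : s'.prod = t'.prod := mul_left_cancel (hsa.trans hta.symm)
  obtain ⟨a₁, a₂, rfl, ha₁, ha₂⟩ := hφ.exists_eq_mul hsa.symm
  obtain ⟨x, hx, rfl⟩ := hφ.exists_phiS_eq hs.1 ha₁
  obtain ⟨y, hy, rfl⟩ := hφ.exists_phiS_eq hs.2 ha₂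
  obtain ⟨y', hy', rfl⟩ := hφ.exists_phiS_eq ht.2 (ha₂.trans hs't')
  refine ⟨x.mul y, mul_mem_rigidFactorizations hx hy, x.mul y', mul_mem_rigidFactorizations hx hy',
    phiS_mul φ x y, phiS_mul φ x y', ?_⟩
  have hyy' : y.prod = y'.prod := hy.2.trans hy'.2.symm
  simp only [card_phiS] at hmdist
  calc d (x.mul y) (x.mul y') = d y y' := hd.d_mul_left x y y' hx.1 hy.1 hy'.1 hyy'
    _ ≤ max (max y.len y'.len) 1 := (hd.d_len y y' hy.1 hy'.1 hyy').2
    _ = mdist (phiS φ x + phiS φ y) (phiS φ x + phiS φ y') := by rw [← hmdist, max_eq_left hpos]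

theorem IsTransferHom.catenaryDeg_le_max (hφ : IsTransferHom φ) (hd : IsDistance H d) (a : H) :
    catenaryDeg d a ≤ max (cpTDeg (φ a)) (cdFib d φ a) := by
  have hbase := cpTDeg_le_iff.1 (le_max_left (cpTDeg (φ a)) (cdFib d φ a))
  have hfiber := cdFib_le_iff.1 (le_max_right (cpTDeg (φ a)) (cdFib d φ a))
  refine catenaryDeg_le_iff.2 fun z hz w hw =>
    reflTransGen_of_map (fun x hx y hy hxy => ?_) (fun s t hst => ?_) hz hw
      (hbase _ (hφ.phiS_mem_permutableFactorizations hz) _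
        (hφ.phiS_mem_permutableFactorizations hw))
  · exact ReflTransGen.mono (.mono (permutableFiber_subset φ a x) le_rfl) _ _
      (hfiber x hx y ⟨hy.1, hy.2, hxy.symm⟩)
  · obtain ⟨x, hx, y, hy, hxs, hyt, hxy⟩ := hφ.exists_lift_dist_le_mdist hd hst.1 hst.2.1
    exact ⟨x, hx, y, hy, hxs, hyt, hx, hy, (Nat.cast_le.2 hxy).trans hst.2.2⟩

theorem catenaryDeg_le_of_transfer_general (hd : IsDistance H d) (hφ : IsTransferHom φ) :
    (∀ a : H, catenaryDeg d a ≤ max (cpTDeg (φ a)) (cdFib d φ a)) ∧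
    (⨆ a : H, catenaryDeg d a) ≤ max (⨆ b : T, cpTDeg b) (⨆ a : H, cdFib d φ a) := by
  refine ⟨hφ.catenaryDeg_le_max hd, iSup_le fun a => (hφ.catenaryDeg_le_max hd a).trans ?_⟩
  exact max_le_max (le_iSup cpTDeg (φ a)) (le_iSup (cdFib d φ) a)

end CatenaryDegree

/-- For a transfer homomorphism `φ : H → T` onto a commutative reduced
cancellative monoid and a distance `d` on `H`, the catenary degree of each `a ∈ H` is
bounded by the max of the permutable catenary degree of `φ(a)` and the catenary degree
in the permutable fibers; consequently `c_d(H) ≤ max {c_p(T), c_d(H, φ)}`. -/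
theorem catenaryDeg_le_of_transfer {H T : Type*} [CancelMonoid H] [CancelCommMonoid T]
    (hTred : ∀ u : Tˣ, u = 1) (hH : Atomic H)
    (d : RF H → RF H → ℕ) (hd : IsDistance H d)
    (φ : H →* T) (hφ : IsTransferHom φ) :
    (∀ a : H, catenaryDeg d a ≤ max (cpTDeg (φ a)) (cdFib d φ a)) ∧
    (⨆ a : H, catenaryDeg d a) ≤ max (⨆ b : T, cpTDeg b) (⨆ a : H, cdFib d φ a) := by
  have : Subsingleton Tˣ := subsingleton_of_forall_eq 1 hTred
  exact catenaryDeg_le_of_transfer_general hd hφ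
end

section
/- A cancellative monoid H is permutably factorial if and only if H is atomic, ω_p'(H) = ω_p(H) ≤ 1, and every almost prime-like element of H is prime-like. -/
/-- Divisibility up to permutation: `a ∣_p b`. -/
def dvdP {H : Type*} [Monoid H] (a b : H) : Prop :=
  ∃ (k l : ℕ) (u : Fin k → H) (v : Fin l → H),
    (∀ i, MAtom (u i)) ∧ (∀ j, MAtom (v j)) ∧
    TAssoc a (List.ofFn u).prod ∧ TAssoc b (List.ofFn v).prod ∧
    ∃ σ : Fin k ↪ Fin l, ∀ i, TAssoc (u i) (v (σ i))

/-- An almost prime-like element (with respect to `∣_p`). -/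
def APLike {H : Type*} [Monoid H] (q : H) : Prop :=
  ¬ IsUnit q ∧ ∀ a b : H, dvdP q (a * b) → dvdP q a ∨ dvdP q b

/-- The number of entries of `l` associated to `q`. -/
noncomputable def countAssoc {H : Type*} [Monoid H] (l : List H) (q : H) : ℕ :=
  Nat.card {i : Fin l.length // TAssoc (l.get i) q}

/-- The `q`-adic valuation of `a`: the set of numbers of occurrences (up to associativity)
of `q` in factorizations of `a` into atoms. -/
def Vq {H : Type*} [Monoid H] (q a : H) : Set ℕ :=
  {n | ∃ l : List H, (∀ u ∈ l, MAtom u) ∧ TAssoc a l.prod ∧ countAssoc l q = n}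

/-- A prime-like element: almost prime-like, with singleton `q`-adic valuations. -/
def PrimeLike {H : Type*} [Monoid H] (q : H) : Prop :=
  APLike q ∧ ∀ a : H, ∃ n : ℕ, Vq q a = {n}

/-- `H` is permutably factorial. -/
def PermutablyFactorial (H : Type*) [Monoid H] : Prop :=
  Atomic H ∧
    ∀ (k l : ℕ) (u : Fin k → H) (v : Fin l → H),
      (∀ i, MAtom (u i)) → (∀ j, MAtom (v j)) →
      (List.ofFn u).prod = (List.ofFn v).prod →
      ∃ σ : Fin k ≃ Fin l, ∀ i, TAssoc (u i) (v (σ i))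
/-- The `ω_p`-invariant of the pair `(a, b)` (factorizations of `a` into atoms). -/
noncomputable def omegaEl {H : Type*} [Monoid H] (a b : H) : ℕ∞ :=
  sInf {N : ℕ∞ | ∀ (n : ℕ) (u : Fin n → H), (∀ i, MAtom (u i)) →
    a = (List.ofFn u).prod → dvdP b a →
    ∃ k : ℕ, (k : ℕ∞) ≤ N ∧ ∃ σ : Fin k ↪ Fin n,
      dvdP b (List.ofFn fun i => u (σ i)).prod}

/-- The `ω_p'`-invariant of the pair `(a, b)` (products of arbitrary elements). -/
noncomputable def omegaEl' {H : Type*} [Monoid H] (a b : H) : ℕ∞ :=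
  sInf {N : ℕ∞ | ∀ (n : ℕ) (u : Fin n → H),
    a = (List.ofFn u).prod → dvdP b a →
    ∃ k : ℕ, (k : ℕ∞) ≤ N ∧ ∃ σ : Fin k ↪ Fin n,
      dvdP b (List.ofFn fun i => u (σ i)).prod}

noncomputable def omegaH {H : Type*} [Monoid H] (b : H) : ℕ∞ := ⨆ a : H, omegaEl a b

noncomputable def omegaH' {H : Type*} [Monoid H] (b : H) : ℕ∞ := ⨆ a : H, omegaEl' a b

noncomputable def omegaMon (H : Type*) [Monoid H] : ℕ∞ :=
  ⨆ (u : H) (_ : MAtom u), omegaH u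

noncomputable def omegaMon' (H : Type*) [Monoid H] : ℕ∞ :=
  ⨆ (u : H) (_ : MAtom u), omegaH' u

/-!
The `q`-adic valuations are additive, `V_q(a) + V_q(b) ⊆ V_q(ab)`, and an atom `u` divides `a` up to
permutation exactly when `V_u(a)` contains a positive number. In an atomic monoid, permutable
factoriality says that all valuations are single-valued: families of atoms agree up to order and
association iff they meet every association class equally often. Single-valuedness
and additivity make every atom almost prime-like. For a non-unit `q`, being almost prime-like
amounts to `ω_p'(H, q) ≤ 1`, because `q` never divides the empty product; and `ω_p(H) ≥ 1` as soon
as `H` has an atom.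
-/

section FiberCardinality

variable {ι κ α : Type*}

theorem exists_equiv_rel_iff_card_fiber_eq [Finite ι] [Finite κ] {r : α → α → Prop}
    (hr : Equivalence r) {u : ι → α} {v : κ → α} :
    (∃ σ : ι ≃ κ, ∀ i, r (u i) (v (σ i))) ↔
      ∀ q, Nat.card {i // r (u i) q} = Nat.card {j // r (v j) q} := by
  constructor
  · rintro ⟨σ, hσ⟩ q
    exact Nat.card_congr <| σ.subtypeEquiv fun i =>
      ⟨hr.trans (hr.symm (hσ i)), hr.trans (hσ i)⟩
  · intro hcard
    let s : Setoid α := ⟨r, hr⟩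
    have fiberEquiv (c : Quotient s) : Nonempty ({i // ⟦u i⟧ = c} ≃ {j // ⟦v j⟧ = c}) := by
      induction c using Quotient.inductionOn with
      | h q =>
        simp only [Quotient.eq]
        exact Finite.card_eq.1 (hcard q)
    let e := fun c => (fiberEquiv c).some
    exact ⟨Equiv.ofFiberEquiv e, fun i => Quotient.exact (Equiv.ofFiberEquiv_map e i).symm⟩

end FiberCardinality

section Monoid

variable {H : Type*} [Monoid H]

namespace TAssoc

variable {a b c : H}

@[refl]
theorem refl (a : H) : TAssoc a a := ⟨1, 1, by simp⟩

@[symm]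
theorem symm (h : TAssoc a b) : TAssoc b a := by
  obtain ⟨ε, η, rfl⟩ := h
  exact ⟨ε⁻¹, η⁻¹, by simp [mul_assoc]⟩

theorem trans (hab : TAssoc a b) (hbc : TAssoc b c) : TAssoc a c := by
  obtain ⟨ε, η, rfl⟩ := hab
  obtain ⟨ε', η', rfl⟩ := hbc
  exact ⟨ε' * ε, η * η', by simp [mul_assoc]⟩

theorem equivalence : Equivalence (TAssoc (H := H)) := ⟨refl, symm, trans⟩

theorem isUnit_iff (h : TAssoc a b) : IsUnit a ↔ IsUnit b := by
  obtain ⟨ε, η, rfl⟩ := h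
  simp

end TAssoc

namespace MAtom

theorem of_tAssoc {u v : H} (hu : MAtom u) (h : TAssoc u v) : MAtom v := by
  refine ⟨fun hv => hu.1 (h.isUnit_iff.2 hv), ?_⟩
  rintro c d rfl
  obtain ⟨ε, η, hε⟩ := h.symm
  simpa using hu.2 (ε * c) (d * η) (by rw [hε]; simp only [mul_assoc])

theorem not_isUnit_mul {u : H} (hu : MAtom u) (b : H) : ¬ IsUnit (u * b) := by
  rintro ⟨e, he⟩
  obtain ⟨c, hc⟩ : ∃ c : H, u * c = 1 := ⟨b * ↑e⁻¹, by rw [← mul_assoc, ← he, e.mul_inv]⟩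
  obtain ⟨f, hf⟩ : IsUnit (c * u) :=
    (hu.2 u (c * u) (by rw [← mul_assoc, hc, one_mul])).resolve_left hu.1
  have left_inv : (↑f⁻¹ : H) * c * u = 1 := by rw [mul_assoc, ← hf, f.inv_mul]
  exact hu.1 (isUnit_iff_exists_and_exists.2 ⟨⟨c, hc⟩, ⟨_, left_inv⟩⟩)

end MAtom

theorem eq_nil_of_isUnit_prod {l : List H} (hl : ∀ x ∈ l, MAtom x) (h : IsUnit l.prod) :
    l = [] := by
  cases l with
  | nil => rfl
  | cons x t =>
    rw [List.prod_cons] at h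
    exact absurd h ((hl x List.mem_cons_self).not_isUnit_mul _)

theorem forall_mAtom_of_forall₂ {l m : List H} (h : List.Forall₂ TAssoc l m)
    (hl : ∀ x ∈ l, MAtom x) : ∀ x ∈ m, MAtom x := by
  induction h with
  | nil => exact hl
  | cons hxy _ ih =>
    rw [List.forall_mem_cons] at hl ⊢
    exact ⟨hl.1.of_tAssoc hxy, ih hl.2⟩

theorem exists_forall₂_tAssoc_prod_eq {l : List H} (hl : l ≠ []) {a : H}
    (h : TAssoc l.prod a) : ∃ m, List.Forall₂ TAssoc l m ∧ m.prod = a := by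
  induction l generalizing a with
  | nil => exact absurd rfl hl
  | cons x t ih =>
    obtain ⟨ε, η, rfl⟩ := h
    rcases eq_or_ne t [] with rfl | ht
    · exact ⟨[ε * x * η], .cons ⟨ε, η, rfl⟩ .nil, by simp⟩
    · obtain ⟨m, htm, hm⟩ := ih ht (a := t.prod * η) ⟨1, η, by simp⟩
      exact ⟨ε * x :: m, .cons ⟨ε, 1, by simp⟩ htm, by simp [hm, mul_assoc]⟩

section CountAssoc

theorem countAssoc_ofFn {n : ℕ} (u : Fin n → H) (q : H) :
    countAssoc (List.ofFn u) q = Nat.card {i // TAssoc (u i) q} :=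
  Nat.card_congr <| (finCongr List.length_ofFn).subtypeEquiv fun i => by
    rw [List.get_ofFn]; rfl

open scoped Classical in
theorem countAssoc_eq_countP (l : List H) (q : H) :
    countAssoc l q = l.countP fun x => TAssoc x q := by
  induction l with
  | nil => simp [countAssoc]
  | cons x t ih =>
    rw [countAssoc, Nat.card_eq_fintype_card, Fintype.card_subtype] at ih ⊢
    rw [List.countP_cons, ← ih]
    refine (Fin.card_filter_univ_succ _).trans ?_
    split_ifs <;> simp_all

theorem countAssoc_append (l m : List H) (q : H) :
    countAssoc (l ++ m) q = countAssoc l q + countAssoc m q := by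
  classical simp only [countAssoc_eq_countP, List.countP_append]

theorem countAssoc_pos_iff {l : List H} {q : H} :
    0 < countAssoc l q ↔ ∃ x ∈ l, TAssoc x q := by
  classical simp only [countAssoc_eq_countP, List.countP_pos_iff, decide_eq_true_eq]

theorem countAssoc_eq_of_forall₂ {l m : List H} (h : List.Forall₂ TAssoc l m) (q : H) :
    countAssoc l q = countAssoc m q := by
  obtain ⟨hlen, hget⟩ := List.forall₂_iff_get.1 h
  exact (exists_equiv_rel_iff_card_fiber_eq TAssoc.equivalence).1
    ⟨finCongr hlen, fun i => hget i i.2 (hlen ▸ i.2)⟩ q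

end CountAssoc

section Valuation

theorem Atomic.Vq_nonempty (hH : Atomic H) (q a : H) : (Vq q a).Nonempty := by
  by_cases ha : IsUnit a
  · obtain ⟨e, rfl⟩ := ha
    exact ⟨_, [], by simp, ⟨e⁻¹, 1, by simp⟩, rfl⟩
  · obtain ⟨l, -, hl, rfl⟩ := hH a ha
    exact ⟨_, l, hl, .refl _, rfl⟩

theorem primeLike_iff_subsingleton_Vq (hH : Atomic H) {q : H} :
    PrimeLike q ↔ APLike q ∧ ∀ a, (Vq q a).Subsingleton := by
  simp only [PrimeLike, Set.exists_eq_singleton_iff_nonempty_subsingleton, hH.Vq_nonempty,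
    true_and]

theorem Vq_subset_singleton_zero {q : H} (hq : ¬ MAtom q) (a : H) : Vq q a ⊆ {0} := by
  rintro _ ⟨l, hl, -, rfl⟩
  refine Nat.eq_zero_of_not_pos fun hpos => hq ?_
  obtain ⟨x, hx, hxq⟩ := countAssoc_pos_iff.1 hpos
  exact (hl x hx).of_tAssoc hxq

theorem add_mem_Vq_mul {q a b : H} {m n : ℕ} (hm : m ∈ Vq q a) (hn : n ∈ Vq q b) :
    m + n ∈ Vq q (a * b) := by
  obtain ⟨l, hl, hal, rfl⟩ := hm
  obtain ⟨l', hl', hbl', rfl⟩ := hn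
  obtain ⟨ε, η, rfl⟩ := hal.symm
  obtain ⟨ε', η', rfl⟩ := hbl'.symm
  rcases eq_or_ne l' [] with rfl | hne
  · exact ⟨l ++ [], by simpa using hl, TAssoc.symm ⟨ε, η * ε' * η', by simp [mul_assoc]⟩,
      countAssoc_append _ _ _⟩
  -- The units between the two factorizations are absorbed into the second one.
  · obtain ⟨l'', hll, hprod⟩ := exists_forall₂_tAssoc_prod_eq hne ⟨η * ε', η', rfl⟩
    refine ⟨l ++ l'', List.forall_mem_append.2 ⟨hl, forall_mAtom_of_forall₂ hll hl'⟩,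
      TAssoc.symm ⟨ε, 1, ?_⟩, ?_⟩
    · simp [hprod, mul_assoc]
    · rw [countAssoc_append, countAssoc_eq_of_forall₂ hll]

end Valuation

section Divisibility

theorem MAtom.dvdP_iff {u a : H} (hu : MAtom u) : dvdP u a ↔ ∃ n ∈ Vq u a, 0 < n := by
  constructor
  · rintro ⟨k, n, w, v, hw, hv, huw, hav, σ, hσ⟩
    refine ⟨_, ⟨List.ofFn v, List.forall_mem_ofFn_iff.2 hv, hav, rfl⟩, countAssoc_pos_iff.2 ?_⟩
    cases k with
    | zero => exact absurd (huw.isUnit_iff.2 (by simp)) hu.1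
    | succ k =>
      have hprod : MAtom (List.ofFn w).prod := hu.of_tAssoc huw
      rw [List.ofFn_succ, List.prod_cons] at huw hprod
      obtain ⟨e, he⟩ := (hprod.2 _ _ rfl).resolve_left (hw 0).1
      have hw0 : TAssoc (w 0) u := .trans ⟨1, e, by rw [he, Units.val_one, one_mul]⟩ huw.symm
      exact ⟨v (σ 0), List.mem_ofFn.2 ⟨_, rfl⟩, (hσ 0).symm.trans hw0⟩
  · rintro ⟨_, ⟨l, hl, hal, rfl⟩, hpos⟩
    obtain ⟨x, hx, hxu⟩ := countAssoc_pos_iff.1 hpos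
    obtain ⟨i, rfl⟩ := List.get_of_mem hx
    exact ⟨1, l.length, fun _ => u, l.get, fun _ => hu, fun j => hl _ (List.get_mem l j),
      by simpa using TAssoc.refl u, by rwa [List.ofFn_get],
      ⟨fun _ => i, Function.injective_of_subsingleton _⟩, fun _ => hxu.symm⟩

theorem MAtom.dvdP_self {u : H} (hu : MAtom u) : dvdP u u :=
  ⟨1, 1, fun _ => u, fun _ => u, fun _ => hu, fun _ => hu, by simpa using TAssoc.refl u,
    by simpa using TAssoc.refl u, .refl _, fun _ => .refl u⟩

theorem isUnit_of_dvdP_one {q : H} (h : dvdP q 1) : IsUnit q := by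
  obtain ⟨k, n, u, v, -, hv, hqu, h1v, σ, -⟩ := h
  have hvnil : List.ofFn v = [] :=
    eq_nil_of_isUnit_prod (List.forall_mem_ofFn_iff.2 hv) (h1v.isUnit_iff.1 isUnit_one)
  obtain rfl : n = 0 := List.ofFn_eq_nil_iff.1 hvnil
  obtain rfl : k = 0 := Nat.le_zero.1 (by simpa using Fintype.card_le_of_embedding σ)
  exact hqu.isUnit_iff.2 (by simp)

theorem APLike.exists_mem_dvdP {q : H} (hq : APLike q) {l : List H} (h : dvdP q l.prod) :
    ∃ x ∈ l, dvdP q x := by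
  induction l with
  | nil => exact absurd (isUnit_of_dvdP_one h) hq.1
  | cons x t ih =>
    rw [List.prod_cons] at h
    rcases hq.2 _ _ h with hx | ht
    · exact ⟨x, List.mem_cons_self, hx⟩
    · obtain ⟨y, hy, hqy⟩ := ih ht
      exact ⟨y, List.mem_cons_of_mem _ hy, hqy⟩

theorem MAtom.apLike_of_subsingleton_Vq (hH : Atomic H) {u : H} (hu : MAtom u)
    (hV : ∀ a, (Vq u a).Subsingleton) : APLike u := by
  refine ⟨hu.1, fun a b hab => ?_⟩
  obtain ⟨n, hn, hpos⟩ := hu.dvdP_iff.1 hab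
  obtain ⟨i, hi⟩ := hH.Vq_nonempty u a
  obtain ⟨j, hj⟩ := hH.Vq_nonempty u b
  obtain rfl : n = i + j := hV _ hn (add_mem_Vq_mul hi hj)
  exact (Nat.add_pos_iff_pos_or_pos.1 hpos).imp
    (fun hi0 => hu.dvdP_iff.2 ⟨i, hi, hi0⟩) fun hj0 => hu.dvdP_iff.2 ⟨j, hj, hj0⟩

end Divisibility

section PermutablyFactorial

theorem PermutablyFactorial.countAssoc_eq (hH : PermutablyFactorial H) {l m : List H}
    (hl : ∀ x ∈ l, MAtom x) (hm : ∀ x ∈ m, MAtom x) (h : l.prod = m.prod) (q : H) :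
    countAssoc l q = countAssoc m q :=
  (exists_equiv_rel_iff_card_fiber_eq TAssoc.equivalence).1
    (hH.2 l.length m.length l.get m.get (fun i => hl _ (l.get_mem i)) (fun j => hm _ (m.get_mem j))
      (by simpa only [List.ofFn_get] using h)) q

theorem PermutablyFactorial.subsingleton_Vq (hH : PermutablyFactorial H) (q a : H) :
    (Vq q a).Subsingleton := by
  rintro _ ⟨l, hl, hal, rfl⟩ _ ⟨m, hm, ham, rfl⟩
  have hlm : TAssoc l.prod m.prod := hal.symm.trans ham
  rcases eq_or_ne l [] with rfl | hne
  · rw [eq_nil_of_isUnit_prod hm (hlm.isUnit_iff.1 isUnit_one)]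
  · obtain ⟨l', hll, hprod⟩ := exists_forall₂_tAssoc_prod_eq hne hlm
    rw [countAssoc_eq_of_forall₂ hll,
      hH.countAssoc_eq (forall_mAtom_of_forall₂ hll hl) hm hprod]

theorem permutablyFactorial_iff_subsingleton_Vq :
    PermutablyFactorial H ↔ Atomic H ∧ ∀ q a : H, (Vq q a).Subsingleton := by
  refine ⟨fun hH => ⟨hH.1, hH.subsingleton_Vq⟩, fun ⟨hH, hV⟩ => ⟨hH, ?_⟩⟩
  intro k l u v hu hv huv
  refine (exists_equiv_rel_iff_card_fiber_eq TAssoc.equivalence).2 fun q => ?_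
  rw [← countAssoc_ofFn, ← countAssoc_ofFn]
  exact hV q (List.ofFn u).prod ⟨_, List.forall_mem_ofFn_iff.2 hu, .refl _, rfl⟩
    ⟨_, List.forall_mem_ofFn_iff.2 hv, huv ▸ .refl _, rfl⟩

end PermutablyFactorial

section Omega

theorem omegaEl'_le_iff {a b : H} {N : ℕ∞} :
    omegaEl' a b ≤ N ↔ ∀ (n : ℕ) (u : Fin n → H), a = (List.ofFn u).prod → dvdP b a →
      ∃ k : ℕ, (k : ℕ∞) ≤ N ∧ ∃ σ : Fin k ↪ Fin n, dvdP b (List.ofFn fun i => u (σ i)).prod := by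
  refine ⟨fun h n u ha hb => ?_, fun h => sInf_le h⟩
  have hmem : omegaEl' a b ∈ _ := csInf_mem ⟨⊤, fun n u ha hb => ⟨n, le_top, .refl _, ha ▸ hb⟩⟩
  obtain ⟨k, hk, hσ⟩ := hmem n u ha hb
  exact ⟨k, hk.trans h, hσ⟩

theorem apLike_iff_omegaH'_le_one {q : H} (hq : ¬ IsUnit q) : APLike q ↔ omegaH' q ≤ 1 := by
  simp only [omegaH', iSup_le_iff, omegaEl'_le_iff]
  constructor
  · rintro hap _ n u rfl hqu
    obtain ⟨_, hx, hqx⟩ := hap.exists_mem_dvdP hqu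
    obtain ⟨i, rfl⟩ := List.mem_ofFn.1 hx
    exact ⟨1, by simp, ⟨fun _ => i, Function.injective_of_subsingleton _⟩, by simpa using hqx⟩
  · refine fun h => ⟨hq, fun a b hab => ?_⟩
    obtain ⟨k, hk, σ, hσ⟩ := h (a * b) 2 ![a, b] (by simp) hab
    have hk : k ≤ 1 := by exact_mod_cast hk
    interval_cases k
    · exact absurd (isUnit_of_dvdP_one (by simpa using hσ)) hq
    · have hdvd : dvdP q (![a, b] (σ 0)) := by simpa using hσ
      simpa using (Fin.exists_fin_two (p := fun i => dvdP q (![a, b] i))).1 ⟨_, hdvd⟩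

theorem omegaMon'_le_one_iff : omegaMon' H ≤ 1 ↔ ∀ u : H, MAtom u → APLike u := by
  rw [omegaMon', iSup₂_le_iff]
  exact forall₂_congr fun u hu => (apLike_iff_omegaH'_le_one hu.1).symm

theorem omegaMon_le_omegaMon' : omegaMon H ≤ omegaMon' H :=
  iSup₂_mono fun _ _ => iSup_mono fun _ => sInf_le_sInf fun _ hN n w _ => hN n w

theorem MAtom.one_le_omegaH {u : H} (hu : MAtom u) : 1 ≤ omegaH u := by
  refine le_iSup_of_le u (le_sInf fun N hN => ?_)
  obtain ⟨k, hk, σ, hσ⟩ := hN 1 (fun _ => u) (fun _ => hu) (by simp) hu.dvdP_self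
  have hk0 : k ≠ 0 := by
    rintro rfl
    exact hu.1 (isUnit_of_dvdP_one (by simpa using hσ))
  exact le_trans (by exact_mod_cast Nat.one_le_iff_ne_zero.2 hk0) hk

theorem omegaMon'_eq_omegaMon (h : omegaMon' H ≤ 1) : omegaMon' H = omegaMon H :=
  le_antisymm
    (iSup₂_le fun u hu =>
      calc omegaH' u ≤ omegaMon' H := le_iSup₂_of_le u hu le_rfl
        _ ≤ 1 := h
        _ ≤ omegaH u := hu.one_le_omegaH
        _ ≤ omegaMon H := le_iSup₂_of_le u hu le_rfl)
    omegaMon_le_omegaMon'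

end Omega

theorem permutablyFactorial_iff_omega_general :
    PermutablyFactorial H ↔
      (Atomic H ∧ omegaMon' H = omegaMon H ∧ omegaMon H ≤ 1 ∧
        ∀ q : H, APLike q → PrimeLike q) := by
  rw [permutablyFactorial_iff_subsingleton_Vq]
  constructor
  · rintro ⟨hH, hV⟩
    have hω : omegaMon' H ≤ 1 :=
      omegaMon'_le_one_iff.2 fun u hu => hu.apLike_of_subsingleton_Vq hH (hV u)
    exact ⟨hH, omegaMon'_eq_omegaMon hω, omegaMon_le_omegaMon'.trans hω,
      fun q hq => (primeLike_iff_subsingleton_Vq hH).2 ⟨hq, hV q⟩⟩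
  · rintro ⟨hH, heq, hω, hprime⟩
    have hatom : ∀ u : H, MAtom u → APLike u := omegaMon'_le_one_iff.1 (heq ▸ hω)
    refine ⟨hH, fun q a => ?_⟩
    by_cases hq : MAtom q
    · exact ((primeLike_iff_subsingleton_Vq hH).1 (hprime q (hatom q hq))).2 a
    · exact Set.subsingleton_singleton.anti (Vq_subset_singleton_zero hq a)

end Monoid

/-- A cancellative monoid is permutably factorial iff it is atomic,
`ω_p'(H) = ω_p(H) ≤ 1`, and every almost prime-like element is prime-like. -/
theorem permutablyFactorial_iff_omega {H : Type*} [CancelMonoid H] :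
    PermutablyFactorial H ↔
      (Atomic H ∧ omegaMon' H = omegaMon H ∧ omegaMon H ≤ 1 ∧
        ∀ q : H, APLike q → PrimeLike q) := by
  exact permutablyFactorial_iff_omega_general
end
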